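/- For every natural number m ≥ 1, the real Clifford algebra Clℝ(w) with n = 4m + 1 generators and w identically +1 (the algebra R_{4m+1}) is isomorphic as an ℝ-algebra to the product algebra Clℝ(w') × Clℝ(w'), where w' is identically +1 on Fin (4m); i.e. R_{4m+1} is the direct sum of two copies of R_{4m}. (The second identity of equation (7): R_{4m'+1} = Ω_{4m'}, the Clifford algebra over the double numbers Ω = ℝ ⊕ ℝ; the splitting is realized by the central idempotents (1 ± ω)/2 built from the volume element, which squares to +1.) -/

import Mathlib

/-!
Let `B` be the Clifford algebra of `Q` and `A` the Clifford algebra of `⟨d⟩ ⊥ Q`, with `e ∈ A` the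
generator of the new line. If `ω ∈ B` anticommutes with the generators of `B` and `d ω² = 1`, then
`z = ω e` is central in `A` and `z² = 1`, so the idempotents `(1 ± z) / 2` split `A`. Each factor is
a copy of `B`, since sending `e` to `± d ω` extends the identity of `B` to a map `A → B` under which
`z` goes to `± 1`.

For a diagonal form in `n` variables with `n` even, the product of the generators anticommutes with
each of them, and its square is the product of the coefficients up to the sign
`(-1) ^ n.choose 2`. A suitable multiple of it is the required `ω` as soon as the product of all
`n + 1` coefficients, with this sign, is the square of a unit.
-/

open CliffordAlgebra QuadraticMap

section Anticommuting

variable {A : Type*} [Ring A]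

theorem semiconjBy_neg_comm {a b : A} : SemiconjBy a b (-b) ↔ SemiconjBy b a (-a) := by
  simp only [SemiconjBy, neg_mul]
  rw [← neg_eq_iff_eq_neg, eq_comm]

theorem semiconjBy_neg_one_pow_mul {a x y : A} (h : SemiconjBy a x y) (n : ℕ) :
    SemiconjBy a ((-1) ^ n * x) ((-1) ^ n * y) :=
  ((SemiconjBy.neg_one_right a).pow_right n).mul_right h

theorem semiconjBy_list_prod {l : List A} {a : A} (h : ∀ b ∈ l, SemiconjBy b a (-a)) :
    SemiconjBy l.prod a ((-1) ^ l.length * a) := by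
  induction l with
  | nil => simp
  | cons b l ih =>
    have hb := semiconjBy_neg_one_pow_mul (h b List.mem_cons_self) l.length
    simpa [pow_succ] using hb.mul_left (ih fun c hc => h c (List.mem_cons_of_mem b hc))

theorem semiconjBy_list_prod_of_mem {l : List A} (hl : l.Pairwise fun a b => SemiconjBy b a (-a))
    {a : A} (ha : a ∈ l) : SemiconjBy l.prod a ((-1) ^ (l.length + 1) * a) := by
  induction l with
  | nil => simp at ha
  | cons b l ih =>
    obtain ⟨hb, hl⟩ := List.pairwise_cons.mp hl
    rw [List.prod_cons, List.length_cons]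
    rcases List.mem_cons.mp ha with rfl | ha
    · have h := semiconjBy_neg_one_pow_mul (Commute.refl a) l.length
      simpa [pow_succ] using h.mul_left (semiconjBy_list_prod hb)
    · have h := semiconjBy_neg_one_pow_mul (semiconjBy_neg_comm.mp (hb a ha)) (l.length + 1)
      simpa [pow_succ] using h.mul_left (ih hl ha)

theorem list_prod_mul_self {l : List A} (hl : l.Pairwise fun a b => SemiconjBy b a (-a)) :
    l.prod * l.prod = (-1) ^ l.length.choose 2 * (l.map fun a => a * a).prod := by
  induction l with
  | nil => simp
  | cons a l ih =>
    obtain ⟨ha, hl⟩ := List.pairwise_cons.mp hl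
    have hsign (n : ℕ) (x y : A) : x * ((-1) ^ n * y) = (-1) ^ n * (x * y) :=
      ((Commute.neg_one_right x).pow_right n).left_comm y
    calc (a :: l).prod * (a :: l).prod
        = a * (l.prod * a) * l.prod := by simp only [List.prod_cons, mul_assoc]
      _ = (-1) ^ l.length * (a * a * (l.prod * l.prod)) := by
        rw [(semiconjBy_list_prod ha).eq]
        simp only [mul_assoc, hsign]
      _ = (-1) ^ (a :: l).length.choose 2 * ((a :: l).map fun a => a * a).prod := by
        rw [ih hl, hsign, ← mul_assoc, ← pow_add, List.length_cons, Nat.choose_succ_succ',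
          Nat.choose_one_right, List.map_cons, List.prod_cons]

end Anticommuting

section Idempotent

variable {R A B C : Type*} [CommSemiring R] [Ring A] [Algebra R A] [Ring B] [Algebra R B]
  [Ring C] [Algebra R C]

theorem isIdempotentElem_invOf_two_smul_one_add [Invertible (2 : R)] {z : A} (hz : z * z = 1) :
    IsIdempotentElem (⅟(2 : R) • (1 + z)) := by
  have h : (1 + z) * (1 + z) = (2 : R) • (1 + z) := by
    rw [add_mul, mul_add, mul_add, hz, one_mul, mul_one, one_mul]
    module
  rw [IsIdempotentElem, smul_mul_smul_comm, h, smul_smul, mul_assoc, invOf_mul_self, mul_one]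

/-- The algebra homomorphism `(b, c) ↦ f b * p + g c * (1 - p)` glued from `f` and `g` along an
idempotent `p` that commutes with the images of both. -/
def algHomOfIsIdempotentElem {p : A} (hp : IsIdempotentElem p) (f : B →ₐ[R] A) (g : C →ₐ[R] A)
    (hf : ∀ b, Commute p (f b)) (hg : ∀ c, Commute p (g c)) : B × C →ₐ[R] A :=
  AlgHom.ofLinearMap
    ((LinearMap.mulRight R p ∘ₗ f.toLinearMap).coprod
      (LinearMap.mulRight R (1 - p) ∘ₗ g.toLinearMap))
    (by simp)
    (by
      rintro ⟨b, c⟩ ⟨b', c'⟩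
      have hg' : Commute (1 - p) (g c') := (Commute.one_left _).sub_left (hg c')
      have hf' : Commute (1 - p) (f b') := (Commute.one_left _).sub_left (hf b')
      simp only [LinearMap.coprod_apply, LinearMap.comp_apply, LinearMap.mulRight_apply,
        AlgHom.toLinearMap_apply, Prod.mk_mul_mk, map_mul, add_mul, mul_add]
      rw [(hf b').mul_mul_mul_comm, hp.eq, (hg c').mul_mul_mul_comm, hp.mul_one_sub_self,
        hf'.mul_mul_mul_comm, hp.one_sub_mul_self, hg'.mul_mul_mul_comm, hp.one_sub.eq,
        mul_zero, mul_zero, add_zero, zero_add])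

theorem algHomOfIsIdempotentElem_apply {p : A} (hp : IsIdempotentElem p) (f : B →ₐ[R] A)
    (g : C →ₐ[R] A) (hf : ∀ b, Commute p (f b)) (hg : ∀ c, Commute p (g c)) (x : B × C) :
    algHomOfIsIdempotentElem hp f g hf hg x = f x.1 * p + g x.2 * (1 - p) :=
  rfl

end Idempotent

section Splitting

variable {R M : Type*} [CommRing R] [AddCommGroup M] [Module R M] {Q : QuadraticForm R M}

theorem semiconjBy_map_involute {A : Type*} [Ring A] [Algebra R A] (f : CliffordAlgebra Q →ₐ[R] A)
    {c : A} (hc : ∀ x, SemiconjBy c (f (ι Q x)) (-f (ι Q x))) (a : CliffordAlgebra Q) :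
    SemiconjBy c (f a) (f (involute a)) := by
  induction a using CliffordAlgebra.induction with
  | algebraMap r =>
    simpa only [AlgHom.commutes] using (Algebra.commute_algebraMap_right r c).semiconjBy
  | ι x => simpa only [involute_ι, map_neg] using hc x
  | mul a b ha hb => simpa only [map_mul] using ha.mul_right hb
  | add a b ha hb => simpa only [map_add] using ha.add_right hb

/-- The orthogonal sum `⟨d⟩ ⊥ Q` of `Q` and the line with form `t ↦ d * t ^ 2`. -/
abbrev adjoinLine (d : R) (Q : QuadraticForm R M) : QuadraticForm R (R × M) :=
  (d • QuadraticMap.sq).prod Q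

/-- The homomorphism of Clifford algebras induced by the inclusion of `Q` into `⟨d⟩ ⊥ Q`. -/
abbrev mapAdjoinLine (d : R) (Q : QuadraticForm R M) :
    CliffordAlgebra Q →ₐ[R] CliffordAlgebra (adjoinLine d Q) :=
  map (QuadraticMap.Isometry.inr (d • QuadraticMap.sq) Q)

@[simp]
theorem mapAdjoinLine_ι (d : R) (x : M) : mapAdjoinLine d Q (ι Q x) = ι _ (0, x) :=
  map_apply_ι _ _

/-- `ω` splits the Clifford algebra of `⟨d⟩ ⊥ Q`: it anticommutes with the generators of the
Clifford algebra of `Q` and `d • ω ^ 2 = 1`. Multiplying `ω` by the generator of the line `⟨d⟩`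
then gives a central square root of `1`. -/
structure IsSplittingElement (d : R) (ω : CliffordAlgebra Q) : Prop where
  smul_mul_self : d • (ω * ω) = 1
  semiconjBy_ι (x : M) : SemiconjBy ω (ι Q x) (-ι Q x)

namespace IsSplittingElement

variable {d : R} {ω : CliffordAlgebra Q}

theorem neg (hω : IsSplittingElement d ω) : IsSplittingElement d (-ω) where
  smul_mul_self := by rw [neg_mul_neg, hω.smul_mul_self]
  semiconjBy_ι x := (hω.semiconjBy_ι x).neg_left

theorem smul_add_ι_mul_self (hω : IsSplittingElement d ω) (t : R) (x : M) :
    (t • d • ω + ι Q x) * (t • d • ω + ι Q x) = algebraMap R _ (adjoinLine d Q (t, x)) := by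
  have hcross : ω * ι Q x + ι Q x * ω = 0 := by
    rw [(hω.semiconjBy_ι x).eq, neg_mul, neg_add_cancel]
  have hsq : (t • d • ω) * (t • d • ω) = (d * (t * t)) • (1 : CliffordAlgebra Q) := by
    rw [← hω.smul_mul_self]
    simp only [smul_mul_smul_comm, smul_smul]
    congr 1
    ring
  calc (t • d • ω + ι Q x) * (t • d • ω + ι Q x)
      = (t • d • ω) * (t • d • ω) + (t * d) • (ω * ι Q x + ι Q x * ω) + ι Q x * ι Q x := by
        simp only [add_mul, mul_add, smul_mul_assoc, mul_smul_comm, smul_smul, smul_add]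
        abel
    _ = algebraMap R _ (adjoinLine d Q (t, x)) := by
        rw [hsq, hcross, smul_zero, add_zero, ι_sq_scalar, ← Algebra.algebraMap_eq_smul_one,
          ← map_add]
        simp

/-- The algebra homomorphism from the Clifford algebra of `⟨d⟩ ⊥ Q` to that of `Q` which is the
identity on `Q` and sends the generator of the line `⟨d⟩` to `d • ω`. -/
def retraction (hω : IsSplittingElement d ω) :
    CliffordAlgebra (adjoinLine d Q) →ₐ[R] CliffordAlgebra Q :=
  lift _ ⟨(LinearMap.toSpanSingleton R _ (d • ω)).coprod (ι Q), fun v =>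
    hω.smul_add_ι_mul_self v.1 v.2⟩

@[simp]
theorem retraction_ι (hω : IsSplittingElement d ω) (v : R × M) :
    hω.retraction (ι _ v) = v.1 • d • ω + ι Q v.2 :=
  lift_ι_apply _ _ _

@[simp]
theorem retraction_mapAdjoinLine (hω : IsSplittingElement d ω) (a : CliffordAlgebra Q) :
    hω.retraction (mapAdjoinLine d Q a) = a := by
  have h : hω.retraction.comp (mapAdjoinLine d Q) = AlgHom.id R _ := by
    ext x
    simp
  exact DFunLike.congr_fun h a

variable (d ω) in
/-- The product of `ω` with the generator of the line `⟨d⟩` in the Clifford algebra of `⟨d⟩ ⊥ Q`. -/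
def centralRoot : CliffordAlgebra (adjoinLine d Q) :=
  mapAdjoinLine d Q ω * ι _ (1, 0)

theorem centralRoot_neg : centralRoot d (-ω) = -centralRoot d ω := by
  simp only [centralRoot, map_neg, neg_mul]

theorem commute_centralRoot_mapAdjoinLine (hω : IsSplittingElement d ω) (a : CliffordAlgebra Q) :
    Commute (centralRoot d ω) (mapAdjoinLine d Q a) := by
  have he : SemiconjBy (ι (adjoinLine d Q) (1, 0)) (mapAdjoinLine d Q a)
      (mapAdjoinLine d Q (involute a)) := by
    refine semiconjBy_map_involute _ (fun x => ?_) a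
    rw [SemiconjBy, neg_mul, mapAdjoinLine_ι]
    exact ι_mul_ι_comm_of_isOrtho (IsOrtho.inl_inr 1 x)
  have hω' : SemiconjBy ω (involute a) a := by
    simpa using semiconjBy_map_involute (AlgHom.id R _) hω.semiconjBy_ι (involute a)
  exact (hω'.map (mapAdjoinLine d Q)).mul_left he

theorem smul_mapAdjoinLine_mul_centralRoot (hω : IsSplittingElement d ω) :
    d • (mapAdjoinLine d Q ω * centralRoot d ω) = ι _ (1, 0) := by
  rw [centralRoot, ← mul_assoc, ← map_mul, ← smul_mul_assoc, ← map_smul, hω.smul_mul_self,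
    map_one, one_mul]

theorem centralRoot_mul_self (hω : IsSplittingElement d ω) :
    centralRoot d ω * centralRoot d ω = 1 := by
  have he : ι (adjoinLine d Q) (1, 0) * ι (adjoinLine d Q) (1, 0) = algebraMap R _ d := by
    rw [ι_sq_scalar]
    simp
  calc centralRoot d ω * centralRoot d ω
      = mapAdjoinLine d Q ω * centralRoot d ω * ι _ (1, 0) := by
        rw [← (hω.commute_centralRoot_mapAdjoinLine ω).eq, mul_assoc, centralRoot]
    _ = mapAdjoinLine d Q (ω * ω) * (ι _ (1, 0) * ι _ (1, 0)) := by
        simp only [centralRoot, map_mul, mul_assoc]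
    _ = 1 := by
        rw [he, ← Algebra.commutes, ← Algebra.smul_def, ← map_smul, hω.smul_mul_self, map_one]

theorem retraction_centralRoot (hω : IsSplittingElement d ω) :
    hω.retraction (centralRoot d ω) = 1 := by
  rw [centralRoot, map_mul, retraction_mapAdjoinLine, retraction_ι, map_zero, add_zero, one_smul,
    mul_smul_comm, hω.smul_mul_self]

theorem retraction_neg_centralRoot (hω : IsSplittingElement d ω) :
    hω.neg.retraction (centralRoot d ω) = -1 := by
  rw [← neg_neg (centralRoot d ω), ← centralRoot_neg, map_neg, retraction_centralRoot]

variable [Invertible (2 : R)]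

variable (d ω) in
/-- The idempotent `(1 + z) / 2` of the central square root of one `z = centralRoot d ω`. -/
def centralIdempotent : CliffordAlgebra (adjoinLine d Q) :=
  ⅟(2 : R) • (1 + centralRoot d ω)

theorem retraction_centralIdempotent (hω : IsSplittingElement d ω) :
    hω.retraction (centralIdempotent d ω) = 1 := by
  rw [centralIdempotent, map_smul, map_add, map_one, retraction_centralRoot, ← two_smul R,
    smul_smul, invOf_mul_self, one_smul]

theorem retraction_neg_centralIdempotent (hω : IsSplittingElement d ω) :
    hω.neg.retraction (centralIdempotent d ω) = 0 := by
  rw [centralIdempotent, map_smul, map_add, map_one, hω.retraction_neg_centralRoot,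
    add_neg_cancel, smul_zero]

theorem centralIdempotent_sub_one_sub :
    centralIdempotent d ω - (1 - centralIdempotent d ω) = centralRoot d ω := by
  rw [← sub_add, sub_add_eq_add_sub, ← two_smul R, centralIdempotent, smul_smul, mul_invOf_self,
    one_smul, add_sub_cancel_left]

/-- The homomorphism `(a, b) ↦ a * p + b * (1 - p)` to the Clifford algebra of `⟨d⟩ ⊥ Q`, where
`p = centralIdempotent d ω`. -/
def ofProd (hω : IsSplittingElement d ω) :
    CliffordAlgebra Q × CliffordAlgebra Q →ₐ[R] CliffordAlgebra (adjoinLine d Q) :=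
  have hcomm (a : CliffordAlgebra Q) :
      Commute (centralIdempotent d ω) (mapAdjoinLine d Q a) :=
    ((Commute.one_left _).add_left (hω.commute_centralRoot_mapAdjoinLine a)).smul_left _
  algHomOfIsIdempotentElem (isIdempotentElem_invOf_two_smul_one_add hω.centralRoot_mul_self)
    (mapAdjoinLine d Q) (mapAdjoinLine d Q) hcomm hcomm

theorem ofProd_apply (hω : IsSplittingElement d ω) (a b : CliffordAlgebra Q) :
    hω.ofProd (a, b) = mapAdjoinLine d Q a * centralIdempotent d ω +
      mapAdjoinLine d Q b * (1 - centralIdempotent d ω) :=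
  rfl

theorem ofProd_retraction_ι (hω : IsSplittingElement d ω) (v : R × M) :
    hω.ofProd (hω.retraction (ι _ v), hω.neg.retraction (ι _ v)) = ι _ v := by
  obtain ⟨t, x⟩ := v
  set j := mapAdjoinLine d Q
  set p := centralIdempotent d ω
  calc hω.ofProd (hω.retraction (ι _ (t, x)), hω.neg.retraction (ι _ (t, x)))
      = (t • d • j ω + j (ι Q x)) * p + (t • d • -j ω + j (ι Q x)) * (1 - p) := by
        simp only [ofProd_apply, retraction_ι, map_add, map_smul, map_neg, j, p]
    _ = t • d • (j ω * (p - (1 - p))) + j (ι Q x) := by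
        simp only [add_mul, mul_sub, smul_mul_assoc, neg_mul, mul_one]
        module
    _ = t • ι _ (1, 0) + ι _ (0, x) := by
        rw [centralIdempotent_sub_one_sub, hω.smul_mapAdjoinLine_mul_centralRoot, mapAdjoinLine_ι]
    _ = ι _ (t, x) := by
        rw [← map_smul, ← map_add]
        simp

/-- The splitting of the Clifford algebra of `⟨d⟩ ⊥ Q` into two copies of that of `Q`; the factors
are cut out by the idempotents `(1 ± z) / 2` with `z = centralRoot d ω`. -/
def algEquivProd (hω : IsSplittingElement d ω) :
    CliffordAlgebra (adjoinLine d Q) ≃ₐ[R] CliffordAlgebra Q × CliffordAlgebra Q :=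
  AlgEquiv.ofAlgHom (hω.retraction.prod hω.neg.retraction) hω.ofProd
    (by
      refine AlgHom.ext fun ⟨a, b⟩ => Prod.ext ?_ ?_
      · change hω.retraction (hω.ofProd (a, b)) = a
        simp [ofProd_apply, hω.retraction_centralIdempotent]
      · change hω.neg.retraction (hω.ofProd (a, b)) = b
        simp [ofProd_apply, hω.retraction_neg_centralIdempotent])
    (CliffordAlgebra.hom_ext (LinearMap.ext hω.ofProd_retraction_ι))

end IsSplittingElement

end Splitting

section Diagonal

variable {R : Type*} [CommRing R] {n : ℕ}

/-- The form with coefficients `w` is the orthogonal sum of its first coordinate line and the form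
in the remaining coordinates. -/
def weightedSumSquaresConsEquiv (w : Fin (n + 1) → R) :
    (adjoinLine (w 0) (weightedSumSquares R fun i : Fin n => w i.succ)).IsometryEquiv
      (weightedSumSquares R w) where
  toLinearEquiv := Fin.consLinearEquiv R fun _ : Fin (n + 1) => R
  map_app' v := by simp [weightedSumSquares_apply, Fin.sum_univ_succ]

theorem isOrtho_weightedSumSquares_single {m : Type*} [Fintype m] [DecidableEq m] (w : m → R)
    {i j : m} (hij : i ≠ j) (a b : R) :
    (weightedSumSquares R w).IsOrtho (Pi.single i a) (Pi.single j b) := by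
  rw [isOrtho_def]
  simp only [weightedSumSquares_apply, ← Finset.sum_add_distrib]
  refine Finset.sum_congr rfl fun k _ => ?_
  rcases ne_or_eq k i with hk | rfl
  · simp [Pi.single_eq_of_ne hk]
  · simp [Pi.single_eq_of_ne hij]

/-- The ordered product of the standard generators of the Clifford algebra of a diagonal form. -/
def volumeElement (w : Fin n → R) : CliffordAlgebra (weightedSumSquares R w) :=
  (List.ofFn fun i => ι (weightedSumSquares R w) (Pi.single i 1)).prod

theorem pairwise_semiconjBy_ofFn_ι_single (w : Fin n → R) :
    (List.ofFn fun i => ι (weightedSumSquares R w) (Pi.single i 1)).Pairwise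
      fun a b => SemiconjBy b a (-a) := by
  refine List.pairwise_ofFn.mpr fun i j hij => ?_
  rw [SemiconjBy, neg_mul]
  exact ι_mul_ι_comm_of_isOrtho (isOrtho_weightedSumSquares_single w hij.ne' 1 1)

theorem volumeElement_mul_self (w : Fin n → R) :
    volumeElement w * volumeElement w = algebraMap R _ ((-1) ^ n.choose 2 * ∏ i, w i) := by
  have hsq (i : Fin n) : ι (weightedSumSquares R w) (Pi.single i 1) * ι _ (Pi.single i 1) =
      algebraMap R _ (w i) := by
    simp [ι_sq_scalar, weightedSumSquares_apply, Pi.single_apply]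
  rw [volumeElement, list_prod_mul_self (pairwise_semiconjBy_ofFn_ι_single w), List.length_ofFn,
    List.map_ofFn, ← List.prod_ofFn, map_mul, map_list_prod, List.map_ofFn]
  simp [Function.comp_def, hsq]

theorem semiconjBy_volumeElement_ι (hn : Even n) (w : Fin n → R) (x : Fin n → R) :
    SemiconjBy (volumeElement w) (ι _ x) (-ι _ x) := by
  have hsingle (i : Fin n) : SemiconjBy (volumeElement w) (ι _ (Pi.single i 1))
      (-ι _ (Pi.single i 1)) := by
    simpa [hn.add_one.neg_one_pow, volumeElement] using
      semiconjBy_list_prod_of_mem (pairwise_semiconjBy_ofFn_ι_single w)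
        (List.mem_ofFn.mpr ⟨i, rfl⟩)
  have hlin : LinearMap.mulLeft R (volumeElement w) ∘ₗ ι (weightedSumSquares R w) =
      LinearMap.mulRight R (volumeElement w) ∘ₗ (-ι (weightedSumSquares R w)) :=
    LinearMap.pi_ext' fun i => LinearMap.ext_ring (hsingle i)
  exact LinearMap.congr_fun hlin x

theorem isSplittingElement_smul_volumeElement (hn : Even n) (w : Fin n → R) {d : R} {u : Rˣ}
    (hu : (-1) ^ n.choose 2 * (d * ∏ i, w i) = (u : R) ^ 2) :
    IsSplittingElement d ((↑u⁻¹ : R) • volumeElement w) where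
  smul_mul_self := by
    have hscalar : d * ((↑u⁻¹ : R) * ↑u⁻¹) * ((-1) ^ n.choose 2 * ∏ i, w i) = 1 :=
      calc d * ((↑u⁻¹ : R) * ↑u⁻¹) * ((-1) ^ n.choose 2 * ∏ i, w i)
          = (↑u⁻¹ : R) ^ 2 * ((-1) ^ n.choose 2 * (d * ∏ i, w i)) := by ring
        _ = 1 := by rw [hu, ← mul_pow, Units.inv_mul, one_pow]
    rw [smul_mul_smul_comm, volumeElement_mul_self, smul_smul, Algebra.smul_def, ← map_mul,
      hscalar, map_one]
  semiconjBy_ι x := by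
    rw [SemiconjBy, smul_mul_assoc, mul_smul_comm, (semiconjBy_volumeElement_ι hn w x).eq]

end Diagonal

theorem cliffordAlgebra_four_mul_add_one_isomorphic_prod_general {R : Type*} [CommRing R]
    [Invertible (2 : R)] {n : ℕ} (hn : Even n) (w : Fin (n + 1) → R) {u : Rˣ}
    (hu : (-1) ^ n.choose 2 * ∏ i, w i = (u : R) ^ 2) :
    Nonempty (CliffordAlgebra (weightedSumSquares R w) ≃ₐ[R]
      CliffordAlgebra (weightedSumSquares R fun i : Fin n => w i.succ) ×
      CliffordAlgebra (weightedSumSquares R fun i : Fin n => w i.succ)) := by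
  rw [Fin.prod_univ_succ] at hu
  have hω := isSplittingElement_smul_volumeElement hn (fun i : Fin n => w i.succ) hu
  exact ⟨(equivOfIsometry (weightedSumSquaresConsEquiv w)).symm.trans hω.algEquivProd⟩

/-- Second identity of eq. (7): `R_{4m+1} = Ω_{4m} = R_{4m} ⊕ R_{4m}`. -/
theorem cliffordAlgebra_four_mul_add_one_isomorphic_prod (m : ℕ) (hm : 1 ≤ m) :
    Nonempty
      (CliffordAlgebra (QuadraticMap.weightedSumSquares ℝ (fun _ : Fin (4 * m + 1) => (1 : ℝ)))
        ≃ₐ[ℝ]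
          CliffordAlgebra (QuadraticMap.weightedSumSquares ℝ (fun _ : Fin (4 * m) => (1 : ℝ))) ×
          CliffordAlgebra (QuadraticMap.weightedSumSquares ℝ (fun _ : Fin (4 * m) => (1 : ℝ)))) := by
  have hchoose : (4 * m).choose 2 = 2 * (m * (4 * m - 1)) := by
    rw [Nat.choose_two_right]
    exact Nat.div_eq_of_eq_mul_left two_pos (by ring)
  have hn : Even (4 * m) := ⟨2 * m, by ring⟩
  exact cliffordAlgebra_four_mul_add_one_isomorphic_prod_general hn (fun _ => (1 : ℝ)) (u := 1)
    (by simp [hchoose])
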